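/- There is an absolute constant C > 0 such that the following holds. Let ε ∈ (0,1), let a, b ∈ ℝⁿ be nonzero vectors, let L be an integer with L ≥ 9n⁶/ε², and let m ≥ C/ε² be an integer. Set u = Round(a/‖a‖, L) and v = Round(b/‖b‖, L), with expanded supports Ū and V̄ in {1,...,n}×{1,...,L}, and let h¹,...,hᵐ be mutually independent uniform hash families on {1,...,n}×{1,...,L}. For each i, let ℓ_U^i and ℓ_V^i be the (almost surely unique) minimizers of hⁱ over Ū and over V̄, with block indices j_U^i and j_V^i; define Z_i = 1[hⁱ(ℓ_U^i) = hⁱ(ℓ_V^i)] · u[j_U^i]·v[j_V^i] / min(u[j_U^i]², v[j_V^i]²), define M̃ = (1/L)·(m / ∑_{i=1}^{m} min(hⁱ(ℓ_U^i), hⁱ(ℓ_V^i)) − 1), and define the estimate F = ‖a‖·‖b‖·(M̃/m)·∑_{i=1}^{m} Z_i. Then with probability at least 2/3, |F − ⟨a,b⟩| ≤ ε · max(‖a_I‖·‖b‖, ‖a‖·‖b_I‖), where I = supp(a) ∩ supp(b). -/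

import Mathlib

open MeasureTheory Finset
open scoped ENNReal

/-- The product measure on `J → ℝ` in which each coordinate is an independent
uniform random variable on `[0,1]`: a uniform hash family on `J`. -/
noncomputable def uniformHash (J : Type*) [Fintype J] : Measure (J → ℝ) :=
  Measure.pi fun _ : J => (volume : Measure ℝ).restrict (Set.Icc 0 1)

/-- A minimizer of `f` over the nonempty finite set `s` (the minimizer of a uniform
hash family over a nonempty set is almost surely unique). -/
noncomputable def argminOn {α : Type*} (s : Finset α) (hs : s.Nonempty) (f : α → ℝ) : α :=
  (s.exists_min_image f hs).choose

/-- The expanded support of a vector `u` with discretization parameter `L`: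
`Ū = {(i,k) ∈ {1,...,n} × {1,...,L} : k ≤ u[i]² ⬝ L}`, so that the block
`{i} × {1,...,L}` contributes exactly `u[i]² ⬝ L` elements when `u[i]²` is an
integer multiple of `1/L`.  (Here `Fin L` represents `{1,...,L}` via `k ↦ k+1`.) -/
noncomputable def expandedSupport {n : ℕ} (L : ℕ) (u : Fin n → ℝ) :
    Finset (Fin n × Fin L) :=
  Finset.univ.filter fun p => ((p.2 : ℕ) + 1 : ℝ) ≤ (u p.1) ^ 2 * L

/-- The weighted MinHash random variable
`Z = 1[h(ℓ_U) = h(ℓ_V)] ⬝ u[j_U] v[j_V] / min(u[j_U]², v[j_V]²)`, where `ℓ_U`, `ℓ_V` are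
the minimizers of the hash `h` over the expanded supports `Ū`, `V̄`, with block indices
`j_U = ℓ_U.1`, `j_V = ℓ_V.1`. -/
noncomputable def Zw {n L : ℕ} (u v : Fin n → ℝ)
    (hU : (expandedSupport L u).Nonempty) (hV : (expandedSupport L v).Nonempty)
    (h : Fin n × Fin L → ℝ) : ℝ :=
  (if h (argminOn (expandedSupport L u) hU h) = h (argminOn (expandedSupport L v) hV h)
      then (1 : ℝ) else 0) *
    (u (argminOn (expandedSupport L u) hU h).1 * v (argminOn (expandedSupport L v) hV h).1 /
      min ((u (argminOn (expandedSupport L u) hU h).1) ^ 2)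
        ((v (argminOn (expandedSupport L v) hV h).1) ^ 2))

/-- `m` mutually independent uniform hash families on `J`. -/
noncomputable def hashFamilies (m : ℕ) (J : Type*) [Fintype J] :
    Measure (Fin m → J → ℝ) :=
  Measure.pi fun _ : Fin m => uniformHash J

/-- An index `i*` maximizing `|z i|`. -/
noncomputable def maxIndex {n : ℕ} [NeZero n] (z : Fin n → ℝ) : Fin n :=
  (Finset.exists_max_image Finset.univ (fun i => |z i|)
    (Finset.univ_nonempty_iff.mpr ⟨⟨0, Nat.pos_of_ne_zero (NeZero.ne n)⟩⟩)).choose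

/-- `Round(z, L)`: first set `z̃ i = sign(z i) ⬝ √(⌊z i ^ 2 ⬝ L⌋ / L)` for every `i`; then,
letting `i*` be an index maximizing `|z i|` and `δ = 1 - ∑ i, z̃ i ^ 2`, replace `z̃ i*` by
`sign(z i*) ⬝ √(z̃ i* ^ 2 + δ)`. -/
noncomputable def roundVec {n : ℕ} (z : Fin n → ℝ) (L : ℕ) : Fin n → ℝ :=
  if hn : n = 0 then z
  else
    haveI : NeZero n := ⟨hn⟩
    let zt : Fin n → ℝ := fun i => Real.sign (z i) * Real.sqrt ((⌊(z i) ^ 2 * L⌋ : ℝ) / L)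
    let istar : Fin n := maxIndex z
    fun i => if i = istar then
        Real.sign (z istar) * Real.sqrt ((zt istar) ^ 2 + (1 - ∑ j, (zt j) ^ 2))
      else zt i

/-- The Euclidean norm `‖x‖ = √(∑ i, x i ^ 2)` of a vector `x : Fin n → ℝ`. -/
noncomputable def vnorm {n : ℕ} (x : Fin n → ℝ) : ℝ :=
  Real.sqrt (∑ i, (x i) ^ 2)

/-- `‖x_S‖`: the Euclidean norm of the vector `x` restricted to the index set `S`
(agreeing with `x` on `S` and zero elsewhere). -/
noncomputable def vnormOn {n : ℕ} (S : Finset (Fin n)) (x : Fin n → ℝ) : ℝ :=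
  Real.sqrt (∑ i ∈ S, (x i) ^ 2)

/-- The support `{i : x i ≠ 0}` of a vector, as a `Finset`. -/
noncomputable def supp {n : ℕ} (x : Fin n → ℝ) : Finset (Fin n) :=
  Finset.univ.filter fun i => x i ≠ 0

/-!
Write `Ū`, `V̄` for the expanded supports and `N` for the size of `Ū ∪ V̄`. The minimizer of a
uniform hash over `Ū ∪ V̄` is uniformly distributed there, and the minimizers over `Ū` and `V̄`
collide exactly when it lies in `Ū ∩ V̄`, whose `i`-th block has `L * min (u i ^ 2) (v i ^ 2)`
elements. Hence `(N / L) * Z` is an unbiased estimator of `⟨u, v⟩`, and since `N ≤ 2 * L` its second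
moment is at most `2 * ∑ i ∈ I, (u i ^ 2 + v i ^ 2)`. The minimum hash value over `Ū ∪ V̄` has mean
`1 / (N + 1)` and comparable standard deviation, so inverting the empirical mean recovers `N` up to
a relative error of order `ε`. Chebyshev's inequality controls both empirical means.

Rounding a unit vector `z` moves at most `1 / L` of squared mass per coordinate onto its largest
coordinate, which already carries at least `1 / n`. So it changes `z` by at most `ε / 4` in norm and
increases no squared coordinate by more than a factor of two.
-/

namespace WeightedMinHash

section Concentration

open ProbabilityTheory

variable {Ω ι : Type*} [MeasurableSpace Ω] {μ : Measure Ω} [IsProbabilityMeasure μ]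

lemma one_sub_add_le_measure {s t g : Set Ω} {p q : ℝ≥0∞} (hs : μ s ≤ p) (ht : μ t ≤ q)
    (hg : ∀ᵐ x ∂μ, x ∉ s → x ∉ t → x ∈ g) : 1 - (p + q) ≤ μ g := by
  rw [tsub_le_iff_right]
  calc 1 = μ Set.univ := measure_univ.symm
    _ ≤ μ (g ∪ (s ∪ t)) := by
      refine measure_mono_ae ?_
      filter_upwards [hg] with x hx _
      change x ∈ g ∪ (s ∪ t)
      simp only [Set.mem_union]
      tauto
    _ ≤ μ g + (μ s + μ t) := (measure_union_le _ _).trans (by gcongr; exact measure_union_le _ _)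
    _ ≤ μ g + (p + q) := by gcongr

/-- The scale `s` may vanish, as it does for vectors with disjoint supports. -/
lemma measure_mul_lt_abs_sub_integral_le {X : Ω → ℝ} (hX : MemLp X 2 μ) {K s η : ℝ}
    (hs : 0 ≤ s) (hη : 0 < η) (hvar : Var[X; μ] ≤ K * s ^ 2) :
    μ {x | η * s < |X x - ∫ y, X y ∂μ|} ≤ ENNReal.ofReal (K / η ^ 2) := by
  rcases hs.eq_or_lt with rfl | hs
  · have hvar0 : Var[X; μ] = 0 := le_antisymm (by simpa using hvar) (variance_nonneg X μ)
    have hnull : μ {x | η * 0 < |X x - ∫ y, X y ∂μ|} = 0 := by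
      refine measure_mono_null ?_ (ae_iff.1 (ae_eq_integral_of_variance_eq_zero hX hvar0))
      intro x hx hconst
      simp [hconst] at hx
    exact hnull ▸ zero_le
  · calc μ {x | η * s < |X x - ∫ y, X y ∂μ|}
        ≤ μ {x | η * s ≤ |X x - ∫ y, X y ∂μ|} :=
          measure_mono (Set.ofPred_subset_ofPred.2 fun _ hx => hx.le)
      _ ≤ ENNReal.ofReal (Var[X; μ] / (η * s) ^ 2) := meas_ge_le_variance_div_sq hX (by positivity)
      _ ≤ ENNReal.ofReal (K * s ^ 2 / (η * s) ^ 2) := by gcongr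
      _ = ENNReal.ofReal (K / η ^ 2) := by rw [mul_pow, mul_div_mul_right _ _ (by positivity)]

variable [Fintype ι] {f : Ω → ℝ}

lemma memLp_pi_mean (hf : MemLp f 2 μ) :
    MemLp (fun H : ι → Ω => (∑ i, f (H i)) / Fintype.card ι) 2 (Measure.pi fun _ => μ) := by
  simp only [div_eq_mul_inv]
  exact (memLp_finsetSum _ fun i _ =>
    hf.comp_measurePreserving (measurePreserving_eval (fun _ : ι => μ) i)).mul_const _

lemma integral_pi_mean [Nonempty ι] (hf : Integrable f μ) :
    ∫ H : ι → Ω, (∑ i, f (H i)) / Fintype.card ι ∂(Measure.pi fun _ => μ) = ∫ x, f x ∂μ := by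
  rw [integral_div, integral_finsetSum _ fun i _ => integrable_comp_eval (i := i) hf]
  simp_rw [integral_comp_eval (μ := fun _ : ι => μ) hf.aestronglyMeasurable]
  simp

lemma variance_pi_mean (hf : MemLp f 2 μ) :
    Var[fun H : ι → Ω => (∑ i, f (H i)) / Fintype.card ι; Measure.pi fun _ => μ] =
      Var[f; μ] / Fintype.card ι := by
  have hsum := variance_sum_pi (ι := ι) (X := fun _ => f) fun _ => hf
  have hfun : (fun H : ι → Ω => ∑ i, f (H i)) = ∑ i, fun H : ι → Ω => f (H i) := by
    ext H; simp
  simp only [div_eq_mul_inv]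
  rw [variance_mul_const, hfun, hsum]
  simp
  field_simp

lemma measure_pi_mul_lt_abs_mean_sub_integral_le [Nonempty ι] (hf : MemLp f 2 μ) {K s η : ℝ}
    (hs : 0 ≤ s) (hη : 0 < η) (hsq : ∫ x, f x ^ 2 ∂μ ≤ K * s ^ 2) :
    (Measure.pi fun _ : ι => μ)
        {H | η * s < |(∑ i, f (H i)) / Fintype.card ι - ∫ x, f x ∂μ|} ≤
      ENNReal.ofReal (K / (Fintype.card ι * η ^ 2)) := by
  have hvar : Var[f; μ] ≤ K * s ^ 2 :=
    (variance_le_expectation_sq hf.aestronglyMeasurable).trans hsq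
  have hcheb := measure_mul_lt_abs_sub_integral_le (K := K / Fintype.card ι)
    (memLp_pi_mean (ι := ι) hf) hs hη (by
      rw [variance_pi_mean hf, div_mul_eq_mul_div]
      gcongr)
  rwa [integral_pi_mean (hf.integrable (by norm_num)), div_div] at hcheb

end Concentration

section UniformHash

variable {J : Type*} [Fintype J]

instance : IsProbabilityMeasure ((volume : Measure ℝ).restrict (Set.Icc 0 1)) :=
  ⟨by simp⟩

instance : IsProbabilityMeasure (uniformHash J) := by
  unfold uniformHash; infer_instance

instance (m : ℕ) : IsProbabilityMeasure (hashFamilies m J) := by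
  unfold hashFamilies; infer_instance

lemma uniformHash_apply_eq_apply {p q : J} (hpq : p ≠ q) :
    uniformHash J {h | h p = h q} = 0 := by
  classical
  let S : Submodule ℝ (J → ℝ) :=
    LinearMap.ker ((LinearMap.proj p : (J → ℝ) →ₗ[ℝ] ℝ) - LinearMap.proj q)
  have hS : ({h | h p = h q} : Set (J → ℝ)) = S := by
    ext h
    simp [S, sub_eq_zero]
  have hS_ne_top : S ≠ ⊤ := fun htop => by
    have hmem : (Pi.single p 1 : J → ℝ) ∈ S := htop ▸ Submodule.mem_top
    simp [S, hpq.symm] at hmem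
  have hle : uniformHash J ≤ volume := by
    rw [uniformHash, ← Measure.restrict_pi_pi]
    exact Measure.restrict_le_self
  exact Measure.absolutelyContinuous_of_le hle
    (hS ▸ Measure.addHaar_submodule volume S hS_ne_top)

lemma uniformHash_ae_injective : ∀ᵐ h ∂(uniformHash J), Function.Injective h := by
  have hpair : ∀ p q : J, ∀ᵐ h ∂(uniformHash J), h p = h q → p = q := by
    intro p q
    by_cases hpq : p = q
    · exact .of_forall fun _ _ => hpq
    · exact (measure_eq_zero_iff_ae_notMem.1 (uniformHash_apply_eq_apply hpq)).mono
        fun h hh heq => absurd heq hh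
  filter_upwards [ae_all_iff.2 fun p => ae_all_iff.2 (hpair p)] with h hh p q
  exact hh p q

lemma uniformHash_ae_mem_Icc : ∀ᵐ h ∂(uniformHash J), ∀ j, h j ∈ Set.Icc (0 : ℝ) 1 :=
  ae_all_iff.2 fun j =>
    (Measure.tendsto_eval_ae_ae (i := j)).eventually (ae_restrict_mem measurableSet_Icc)

end UniformHash

section Minimum

lemma measurable_inf'_apply {J : Type*} {W : Finset J} (hW : W.Nonempty) :
    Measurable fun h : J → ℝ => W.inf' hW h := by
  refine measurable_of_Ioi fun t => ?_
  have hinter : (fun h : J → ℝ => W.inf' hW h) ⁻¹' Set.Ioi t = ⋂ p ∈ W, {h | t < h p} := by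
    ext h
    simp [lt_inf'_iff]
  rw [hinter]
  exact W.measurableSet_biInter fun p _ => measurableSet_lt measurable_const (measurable_pi_apply p)

variable {J : Type*} [Fintype J] {W : Finset J}

lemma uniformHash_lt_inf' (hW : W.Nonempty) {t : ℝ} (ht : 0 ≤ t) :
    uniformHash J {h | t < W.inf' hW h} = ENNReal.ofReal (1 - t) ^ #W := by
  classical
  have hbox : {h : J → ℝ | t < W.inf' hW h} =
      Set.univ.pi fun j => if j ∈ W then Set.Ioi t else Set.univ := by
    ext h
    simp only [Set.mem_ofPred_eq, lt_inf'_iff, Set.mem_univ_pi]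
    refine forall_congr' fun j => ?_
    by_cases hj : j ∈ W <;> simp [hj]
  have hside (j : J) : (volume.restrict (Set.Icc (0 : ℝ) 1))
      (if j ∈ W then Set.Ioi t else Set.univ) = if j ∈ W then ENNReal.ofReal (1 - t) else 1 := by
    split_ifs
    · have hinter : Set.Ioi t ∩ Set.Icc 0 1 = Set.Ioc t 1 := by
        ext x
        exact ⟨fun ⟨hx, _, hx1⟩ => ⟨hx, hx1⟩, fun ⟨hx, hx1⟩ => ⟨hx, ht.trans hx.le, hx1⟩⟩
      rw [Measure.restrict_apply measurableSet_Ioi, hinter, Real.volume_Ioc]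
    · exact measure_univ
  rw [hbox, uniformHash, Measure.pi_pi]
  simp [hside]

lemma uniformHash_ae_inf'_mem_Icc (hW : W.Nonempty) :
    ∀ᵐ h ∂(uniformHash J), W.inf' hW h ∈ Set.Icc (0 : ℝ) 1 := by
  filter_upwards [uniformHash_ae_mem_Icc] with h hh
  obtain ⟨p, hp⟩ := hW
  exact ⟨le_inf' _ _ fun q _ => (hh q).1, (inf'_le _ hp).trans (hh p).2⟩

lemma memLp_inf' (hW : W.Nonempty) (q : ℝ≥0∞) :
    MemLp (fun h : J → ℝ => W.inf' hW h) q (uniformHash J) := by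
  refine MemLp.of_bound (measurable_inf'_apply hW).aestronglyMeasurable 1 ?_
  filter_upwards [uniformHash_ae_inf'_mem_Icc hW] with h hh
  rw [Real.norm_eq_abs, abs_of_nonneg hh.1]
  exact hh.2

lemma lintegral_ofReal_primitive_inf' (hW : W.Nonempty) {g : ℝ → ℝ} (hg : Continuous g)
    (hg0 : ∀ t, 0 < t → 0 ≤ g t) :
    ∫⁻ h, ENNReal.ofReal (∫ t in (0 : ℝ)..(W.inf' hW h), g t) ∂(uniformHash J) =
      ∫⁻ t in Set.Ioc (0 : ℝ) 1, ENNReal.ofReal ((1 - t) ^ #W * g t) := by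
  rw [lintegral_comp_eq_lintegral_meas_lt_mul (uniformHash J)
    ((uniformHash_ae_inf'_mem_Icc hW).mono fun h hh => hh.1) (measurable_inf'_apply hW).aemeasurable
    (fun t _ => hg.intervalIntegrable _ _)
    ((ae_restrict_mem measurableSet_Ioi).mono fun t ht => hg0 t ht)]
  have hvanish : Set.EqOn (fun t => uniformHash J {h | t < W.inf' hW h} * ENNReal.ofReal (g t))
      (fun _ => 0) (Set.Ioi 1) := fun t (ht : 1 < t) => by
    change uniformHash J {h | t < W.inf' hW h} * ENNReal.ofReal (g t) = 0
    rw [uniformHash_lt_inf' hW (zero_le_one.trans ht.le),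
      ENNReal.ofReal_of_nonpos (sub_nonpos.2 ht.le), zero_pow hW.card_ne_zero, zero_mul]
  rw [← Set.Ioc_union_Ioi_eq_Ioi (zero_le_one (α := ℝ)),
    lintegral_union measurableSet_Ioi (Set.Ioc_disjoint_Ioi le_rfl),
    setLIntegral_congr_fun measurableSet_Ioi hvanish, lintegral_zero, add_zero]
  refine setLIntegral_congr_fun measurableSet_Ioc fun t ht => ?_
  have h1t : 0 ≤ 1 - t := sub_nonneg.2 ht.2
  rw [uniformHash_lt_inf' hW ht.1.le, ENNReal.ofReal_mul (pow_nonneg h1t _),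
    ENNReal.ofReal_pow h1t]

lemma integral_primitive_inf' (hW : W.Nonempty) {g : ℝ → ℝ} (hg : Continuous g)
    (hg0 : ∀ t, 0 < t → 0 ≤ g t) :
    ∫ h, (∫ t in (0 : ℝ)..(W.inf' hW h), g t) ∂(uniformHash J) =
      ∫ t in (0 : ℝ)..1, (1 - t) ^ #W * g t := by
  have hprim : Continuous fun x : ℝ => ∫ t in (0 : ℝ)..x, g t :=
    intervalIntegral.continuous_primitive (fun _ _ => hg.intervalIntegrable _ _) 0
  have hprim0 : ∀ x : ℝ, 0 ≤ x → 0 ≤ ∫ t in (0 : ℝ)..x, g t := fun x hx => by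
    rw [intervalIntegral.integral_of_le hx]
    exact setIntegral_nonneg measurableSet_Ioc fun t ht => hg0 t ht.1
  rw [intervalIntegral.integral_of_le zero_le_one,
    integral_eq_lintegral_of_nonneg_ae
      ((uniformHash_ae_inf'_mem_Icc hW).mono fun h hh => hprim0 _ hh.1)
      (hprim.measurable.comp (measurable_inf'_apply hW)).aestronglyMeasurable,
    integral_eq_lintegral_of_nonneg_ae
      ((ae_restrict_mem measurableSet_Ioc).mono fun t ht =>
        mul_nonneg (pow_nonneg (sub_nonneg.2 ht.2) _) (hg0 t ht.1))
      (by fun_prop : Continuous fun t : ℝ => (1 - t) ^ #W * g t).aestronglyMeasurable,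
    lintegral_ofReal_primitive_inf' hW hg hg0]

lemma integral_one_sub_pow (N : ℕ) : ∫ t in (0 : ℝ)..1, (1 - t) ^ N = 1 / (N + 1) := by
  rw [intervalIntegral.integral_comp_sub_left (fun x => x ^ N) 1]
  simp

lemma integral_inf' (hW : W.Nonempty) :
    ∫ h, W.inf' hW h ∂(uniformHash J) = 1 / ((#W : ℝ) + 1) := by
  simpa [integral_one_sub_pow] using
    integral_primitive_inf' hW continuous_const fun _ _ => zero_le_one

lemma integral_inf'_sq (hW : W.Nonempty) :
    ∫ h, W.inf' hW h ^ 2 ∂(uniformHash J) = 2 / (((#W : ℝ) + 1) * (#W + 2)) := by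
  have hprim (x : ℝ) : ∫ t in (0 : ℝ)..x, 2 * t = x ^ 2 := by
    rw [intervalIntegral.integral_const_mul, integral_id]; ring
  have hsplit (t : ℝ) : (1 - t) ^ #W * (2 * t) = 2 * ((1 - t) ^ #W - (1 - t) ^ (#W + 1)) := by
    ring
  have hlayer := integral_primitive_inf' hW (g := fun t => 2 * t) (by fun_prop)
    fun _ _ => by positivity
  simp_rw [hprim, hsplit] at hlayer
  rw [hlayer, intervalIntegral.integral_const_mul, intervalIntegral.integral_sub
    (Continuous.intervalIntegrable (by fun_prop) _ _)
    (Continuous.intervalIntegrable (by fun_prop) _ _), integral_one_sub_pow, integral_one_sub_pow]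
  push_cast
  field_simp
  ring

end Minimum

section Argmin

lemma argminOn_mem {α : Type*} {s : Finset α} (hs : s.Nonempty) (f : α → ℝ) :
    argminOn s hs f ∈ s :=
  (s.exists_min_image f hs).choose_spec.1

lemma apply_argminOn_le {α : Type*} {s : Finset α} (hs : s.Nonempty) (f : α → ℝ) {q : α}
    (hq : q ∈ s) : f (argminOn s hs f) ≤ f q :=
  (s.exists_min_image f hs).choose_spec.2 q hq

lemma apply_argminOn_eq_inf' {α : Type*} {s : Finset α} (hs : s.Nonempty) (f : α → ℝ) :
    f (argminOn s hs f) = s.inf' hs f :=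
  le_antisymm (le_inf' _ _ fun _ => apply_argminOn_le hs f) (inf'_le _ (argminOn_mem hs f))

lemma argminOn_eq_of_forall_le {α : Type*} {s : Finset α} (hs : s.Nonempty) {f : α → ℝ}
    (hf : Function.Injective f) {p : α} (hp : p ∈ s) (hmin : ∀ q ∈ s, f p ≤ f q) :
    argminOn s hs f = p :=
  hf (le_antisymm (apply_argminOn_le hs f hp) (hmin _ (argminOn_mem hs f)))

variable {J : Type*} {W : Finset J}

/-- The event that the hash value at `p` is minimal over `W`; unlike `argminOn`, it is measurable
whatever happens on ties. -/
def minEvent (W : Finset J) (p : J) : Set (J → ℝ) := {h | ∀ q ∈ W, h p ≤ h q}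

lemma measurableSet_minEvent (W : Finset J) (p : J) : MeasurableSet (minEvent W p) := by
  have hinter : minEvent W p = ⋂ q ∈ W, {h | h p ≤ h q} := by ext; simp [minEvent]
  rw [hinter]
  exact Finset.measurableSet_biInter _ fun q _ =>
    measurableSet_le (measurable_pi_apply _) (measurable_pi_apply _)

variable [Fintype J]

lemma uniformHash_minEvent_congr {p q : J} (hp : p ∈ W) (hq : q ∈ W) :
    uniformHash J (minEvent W p) = uniformHash J (minEvent W q) := by
  classical
  have hswap := measurePreserving_arrowCongr'
    (fun _ : J => (volume : Measure ℝ).restrict (Set.Icc 0 1))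
    (fun _ : J => (volume : Measure ℝ).restrict (Set.Icc 0 1)) (Equiv.swap p q)
    (MeasurableEquiv.refl ℝ) (fun _ => MeasurePreserving.id _)
  have hmem : ∀ r ∈ W, Equiv.swap p q r ∈ W := fun r hr => by
    rw [Equiv.swap_apply_def]; split_ifs <;> assumption
  unfold uniformHash
  rw [← hswap.measure_preimage (measurableSet_minEvent W p).nullMeasurableSet]
  congr 1
  ext h
  change (∀ r ∈ W, h ((Equiv.swap p q).symm p) ≤ h ((Equiv.swap p q).symm r)) ↔
    ∀ r ∈ W, h q ≤ h r
  simp only [Equiv.symm_swap, Equiv.swap_apply_left]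
  exact ⟨fun hle r hr => by simpa using hle _ (hmem r hr), fun hle r hr => hle _ (hmem r hr)⟩

lemma uniformHash_real_minEvent {p : J} (hp : p ∈ W) :
    (uniformHash J).real (minEvent W p) = 1 / #W := by
  have hcover : ⋃ q ∈ W, minEvent W q = Set.univ := by
    ext h
    obtain ⟨q, hq, hmin⟩ := W.exists_min_image h ⟨p, hp⟩
    simp only [Set.mem_iUnion, Set.mem_univ, iff_true]
    exact ⟨q, hq, hmin⟩
  have hdisj : (W : Set J).Pairwise fun q r =>
      AEDisjoint (uniformHash J) (minEvent W q) (minEvent W r) := fun q hq r hr hqr =>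
    measure_mono_null (fun h ⟨h1, h2⟩ => le_antisymm (h1 r hr) (h2 q hq))
      (uniformHash_apply_eq_apply hqr)
  have hsum := measure_biUnion_finset₀ hdisj fun q _ =>
    (measurableSet_minEvent W q).nullMeasurableSet
  rw [hcover, measure_univ, sum_congr rfl fun q hq => uniformHash_minEvent_congr hq hp,
    sum_const, nsmul_eq_mul] at hsum
  have hcard : (#W : ℝ) ≠ 0 := by exact_mod_cast (card_pos.2 ⟨p, hp⟩).ne'
  rw [Measure.real, eq_div_iff hcard, mul_comm]
  simpa using (congrArg ENNReal.toReal hsum).symm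

lemma comp_argminOn_ae_eq (hW : W.Nonempty) (c : J → ℝ) :
    (fun h => c (argminOn W hW h)) =ᵐ[uniformHash J]
      fun h => ∑ p ∈ W, (minEvent W p).indicator (fun _ => c p) h := by
  filter_upwards [uniformHash_ae_injective] with h hh
  rw [sum_eq_single_of_mem _ (argminOn_mem hW h), Set.indicator_of_mem]
  · exact fun q hq => apply_argminOn_le hW h hq
  · intro p hp hne
    refine Set.indicator_of_notMem (fun hmin : h ∈ minEvent W p => hne ?_) _
    exact (argminOn_eq_of_forall_le hW hh hp hmin).symm

lemma memLp_comp_argminOn (hW : W.Nonempty) (c : J → ℝ) (q : ℝ≥0∞) :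
    MemLp (fun h => c (argminOn W hW h)) q (uniformHash J) := by
  have hsum : MemLp (fun h => ∑ p ∈ W, (minEvent W p).indicator (fun _ => c p) h) q
      (uniformHash J) :=
    memLp_finsetSum _ fun p _ => memLp_indicator_const _ (measurableSet_minEvent W p) _
      (.inr (measure_ne_top _ _))
  exact hsum.ae_eq (comp_argminOn_ae_eq hW c).symm

lemma integral_comp_argminOn (hW : W.Nonempty) (c : J → ℝ) :
    ∫ h, c (argminOn W hW h) ∂(uniformHash J) = (∑ p ∈ W, c p) / #W := by
  rw [integral_congr_ae (comp_argminOn_ae_eq hW c), integral_finsetSum _ fun p _ =>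
    (integrable_const _).indicator (measurableSet_minEvent W p), sum_div]
  refine sum_congr rfl fun p hp => ?_
  rw [integral_indicator_const _ (measurableSet_minEvent W p), uniformHash_real_minEvent hp,
    smul_eq_mul, one_div_mul_eq_div]

end Argmin

section Discretization

variable {n L : ℕ} {u v x : Fin n → ℝ}

/-- All squared entries of `x` are integer multiples of `1 / L` lying in `[0, 1]`: the vectors
whose squared entries are exactly the block sizes of `expandedSupport L x`, divided by `L`. -/
def IsDiscretized (L : ℕ) (x : Fin n → ℝ) : Prop :=
  ∀ i, ∃ k : ℕ, k ≤ L ∧ x i ^ 2 * L = k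

lemma sq_min_abs (x y : ℝ) : min |x| |y| ^ 2 = min (x ^ 2) (y ^ 2) := by
  rcases le_total |x| |y| with h | h
  · rw [min_eq_left h, min_eq_left (sq_le_sq.2 h), sq_abs]
  · rw [min_eq_right h, min_eq_right (sq_le_sq.2 h), sq_abs]

lemma IsDiscretized.min_abs (hu : IsDiscretized L u) (hv : IsDiscretized L v) :
    IsDiscretized L fun i => min |u i| |v i| := fun i => by
  simp only [sq_min_abs]
  rcases min_choice (u i ^ 2) (v i ^ 2) with h | h <;> rw [h]
  exacts [hu i, hv i]

lemma expandedSupport_inter_expandedSupport :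
    expandedSupport L u ∩ expandedSupport L v =
      expandedSupport L fun i => min |u i| |v i| := by
  ext p
  simp [expandedSupport, sq_min_abs, min_mul_of_nonneg]

lemma sum_expandedSupport (hx : IsDiscretized L x) (c : Fin n → ℝ) :
    ∑ p ∈ expandedSupport L x, c p.1 = L * ∑ i, x i ^ 2 * c i := by
  have hblock (i : Fin n) : #{k : Fin L | ((k : ℕ) + 1 : ℝ) ≤ x i ^ 2 * L} = x i ^ 2 * L := by
    obtain ⟨k, hkL, hk⟩ := hx i
    have hlt : ∀ l : Fin L, ((l : ℕ) + 1 : ℝ) ≤ k ↔ (l : ℕ) < k := fun l => by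
      exact_mod_cast Nat.succ_le_iff
    simp only [hk, hlt, Fin.card_filter_val_lt, min_eq_right hkL]
  rw [expandedSupport, sum_filter, Fintype.sum_prod_type, mul_sum]
  refine sum_congr rfl fun i _ => ?_
  simp only [← sum_filter, sum_const, nsmul_eq_mul, hblock]
  ring

lemma card_expandedSupport (hx : IsDiscretized L x) (hx1 : ∑ i, x i ^ 2 = 1) :
    (#(expandedSupport L x) : ℝ) = L := by
  simpa [hx1] using sum_expandedSupport hx fun _ => 1

end Discretization

section Collision

variable {n L : ℕ} {u v : Fin n → ℝ}

/-- The value of `Zw u v` when the minimizer over the union of the expanded supports is `p`; the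
two minimizers agree exactly when `p` lies in the intersection. -/
noncomputable def collisionWeight (u v : Fin n → ℝ) (p : Fin n × Fin L) : ℝ :=
  if p ∈ expandedSupport L u ∩ expandedSupport L v then
    u p.1 * v p.1 / min (u p.1 ^ 2) (v p.1 ^ 2) else 0

lemma Zw_eq_collisionWeight {hU : (expandedSupport L u).Nonempty}
    {hV : (expandedSupport L v).Nonempty} {h : Fin n × Fin L → ℝ} (hh : Function.Injective h) :
    Zw u v hU hV h = collisionWeight u v
      (argminOn (expandedSupport L u ∪ expandedSupport L v) hU.inl h) := by
  set pU := argminOn (expandedSupport L u) hU h with hpU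
  set pV := argminOn (expandedSupport L v) hV h with hpV
  set p := argminOn (expandedSupport L u ∪ expandedSupport L v) hU.inl h
  have hpmin := fun q hq => apply_argminOn_le (hU.inl : (_ ∪ expandedSupport L v).Nonempty) h
    (q := q) hq
  by_cases hcoll : pU = pV
  · have hpUp : p = pU := by
      refine argminOn_eq_of_forall_le _ hh (mem_union_left _ (argminOn_mem hU h)) fun q hq => ?_
      rcases mem_union.1 hq with hq | hq
      · exact apply_argminOn_le hU h hq
      · exact (congrArg h hcoll).trans_le (apply_argminOn_le hV h hq)
    have hmem : p ∈ expandedSupport L u ∩ expandedSupport L v :=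
      mem_inter.2 ⟨hpUp ▸ argminOn_mem hU h, hpUp ▸ hcoll ▸ argminOn_mem hV h⟩
    rw [Zw, ← hpU, ← hpV, collisionWeight, if_pos hmem, hpUp, ← hcoll, if_pos rfl, one_mul]
  · have hnotMem : p ∉ expandedSupport L u ∩ expandedSupport L v := fun hmem => by
      obtain ⟨hpu, hpv⟩ := mem_inter.1 hmem
      exact hcoll <|
        (argminOn_eq_of_forall_le hU hh hpu fun q hq => hpmin q (mem_union_left _ hq)).trans
          (argminOn_eq_of_forall_le hV hh hpv fun q hq => hpmin q (mem_union_right _ hq)).symm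
    rw [Zw, ← hpU, ← hpV, collisionWeight, if_neg hnotMem, if_neg (hh.ne hcoll), zero_mul]

lemma min_sq_mul_div_min_sq (x y : ℝ) :
    min (x ^ 2) (y ^ 2) * (x * y / min (x ^ 2) (y ^ 2)) = x * y := by
  refine mul_div_cancel_of_imp' fun hmin => ?_
  rcases min_choice (x ^ 2) (y ^ 2) with h | h <;>
    simp [pow_eq_zero_iff two_ne_zero |>.1 (h.symm.trans hmin)]

lemma min_sq_mul_div_min_sq_sq_le (x y : ℝ) :
    min (x ^ 2) (y ^ 2) * (x * y / min (x ^ 2) (y ^ 2)) ^ 2 ≤ x ^ 2 + y ^ 2 := by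
  rcases (le_min (sq_nonneg x) (sq_nonneg y)).eq_or_lt with hmin | hmin
  · rw [← hmin, zero_mul]
    positivity
  · calc min (x ^ 2) (y ^ 2) * (x * y / min (x ^ 2) (y ^ 2)) ^ 2
        = x ^ 2 * y ^ 2 / min (x ^ 2) (y ^ 2) := by field_simp
      _ = max (x ^ 2) (y ^ 2) := by rw [← min_mul_max, mul_div_cancel_left₀ _ hmin.ne']
      _ ≤ x ^ 2 + y ^ 2 := max_le_add_of_nonneg (sq_nonneg x) (sq_nonneg y)

lemma sum_collisionWeight (hu : IsDiscretized L u) (hv : IsDiscretized L v) :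
    ∑ p ∈ expandedSupport L u ∪ expandedSupport L v, collisionWeight u v p =
      L * ∑ i, u i * v i := by
  simp only [collisionWeight]
  rw [sum_ite_mem, inter_eq_right.2 (inter_subset_union), expandedSupport_inter_expandedSupport,
    sum_expandedSupport (hu.min_abs hv) fun i => u i * v i / min (u i ^ 2) (v i ^ 2)]
  simp only [sq_min_abs, min_sq_mul_div_min_sq]

lemma sum_collisionWeight_sq_le (hu : IsDiscretized L u) (hv : IsDiscretized L v)
    {I : Finset (Fin n)} (hI : ∀ i ∉ I, u i * v i = 0) :
    ∑ p ∈ expandedSupport L u ∪ expandedSupport L v, collisionWeight u v p ^ 2 ≤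
      L * ∑ i ∈ I, (u i ^ 2 + v i ^ 2) := by
  simp only [collisionWeight, ite_pow, ne_eq, OfNat.ofNat_ne_zero, not_false_eq_true, zero_pow]
  rw [sum_ite_mem, inter_eq_right.2 (inter_subset_union), expandedSupport_inter_expandedSupport,
    sum_expandedSupport (hu.min_abs hv) fun i => (u i * v i / min (u i ^ 2) (v i ^ 2)) ^ 2]
  simp only [sq_min_abs]
  gcongr
  rw [← sum_subset (subset_univ I) fun i _ hi => by simp [hI i hi]]
  exact sum_le_sum fun i _ => min_sq_mul_div_min_sq_sq_le _ _

variable (hW : (expandedSupport L u ∪ expandedSupport L v).Nonempty)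
include hW

lemma integral_collisionWeight_argminOn (hu : IsDiscretized L u) (hv : IsDiscretized L v) :
    ∫ h, #(expandedSupport L u ∪ expandedSupport L v) / (L : ℝ) *
        collisionWeight u v (argminOn _ hW h) ∂(uniformHash (Fin n × Fin L)) =
      ∑ i, u i * v i := by
  have hL : (L : ℝ) ≠ 0 := by
    obtain ⟨p, -⟩ := hW
    exact_mod_cast p.2.pos.ne'
  have hcard : (#(expandedSupport L u ∪ expandedSupport L v) : ℝ) ≠ 0 := by
    exact_mod_cast hW.card_ne_zero
  rw [integral_const_mul, integral_comp_argminOn, sum_collisionWeight hu hv]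
  field_simp

lemma integral_collisionWeight_argminOn_sq_le (hu : IsDiscretized L u) (hv : IsDiscretized L v)
    (hu1 : ∑ i, u i ^ 2 = 1) (hv1 : ∑ i, v i ^ 2 = 1) {I : Finset (Fin n)}
    (hI : ∀ i ∉ I, u i * v i = 0) :
    ∫ h, (#(expandedSupport L u ∪ expandedSupport L v) / (L : ℝ) *
        collisionWeight u v (argminOn _ hW h)) ^ 2 ∂(uniformHash (Fin n × Fin L)) ≤
      2 * ∑ i ∈ I, (u i ^ 2 + v i ^ 2) := by
  set W := expandedSupport L u ∪ expandedSupport L v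
  have hL : (0 : ℝ) < L := by
    obtain ⟨p, -⟩ := hW
    exact_mod_cast p.2.pos
  have hcard_le : (#W : ℝ) ≤ 2 * L := by
    calc (#W : ℝ) ≤ #(expandedSupport L u) + #(expandedSupport L v) := by
          exact_mod_cast card_union_le _ _
      _ = 2 * L := by rw [card_expandedSupport hu hu1, card_expandedSupport hv hv1]; ring
  simp_rw [mul_pow]
  rw [integral_const_mul, integral_comp_argminOn hW fun p => collisionWeight u v p ^ 2]
  calc (#W / (L : ℝ)) ^ 2 * ((∑ p ∈ W, collisionWeight u v p ^ 2) / #W)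
      ≤ (#W / (L : ℝ)) ^ 2 * ((L * ∑ i ∈ I, (u i ^ 2 + v i ^ 2)) / #W) := by
        gcongr
        exact sum_collisionWeight_sq_le hu hv hI
    _ = #W / (L : ℝ) * ∑ i ∈ I, (u i ^ 2 + v i ^ 2) := by field_simp
    _ ≤ 2 * ∑ i ∈ I, (u i ^ 2 + v i ^ 2) := by
        gcongr
        rwa [div_le_iff₀ hL]

end Collision

section Estimate

lemma min_apply_argminOn {α : Type*} [DecidableEq α] {s t : Finset α} (hs : s.Nonempty)
    (ht : t.Nonempty) (f : α → ℝ) :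
    min (f (argminOn s hs f)) (f (argminOn t ht f)) = (s ∪ t).inf' hs.inl f := by
  rw [apply_argminOn_eq_inf' hs f, apply_argminOn_eq_inf' ht f, inf'_union hs ht]

variable {n L m : ℕ} {u v : Fin n → ℝ}

/-- The MinHash estimate `(M̃ / m) * ∑ i, Z i` of the inner product of the two unit vectors that
`u` and `v` are obtained from by rounding. -/
noncomputable def unitEstimate (u v : Fin n → ℝ) (hU : (expandedSupport L u).Nonempty)
    (hV : (expandedSupport L v).Nonempty) (H : Fin m → Fin n × Fin L → ℝ) : ℝ :=
  1 / (L : ℝ) * (m / (∑ i, min (H i (argminOn (expandedSupport L u) hU (H i)))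
    (H i (argminOn (expandedSupport L v) hV (H i)))) - 1) / m * ∑ i, Zw u v hU hV (H i)

lemma unitEstimate_eq {hU : (expandedSupport L u).Nonempty} {hV : (expandedSupport L v).Nonempty}
    {H : Fin m → Fin n × Fin L → ℝ} (hH : ∀ i, Function.Injective (H i)) {N : ℝ} (hN : 0 < N) :
    unitEstimate u v hU hV H =
      ((N + 1) / ((∑ i, (N + 1) *
        (expandedSupport L u ∪ expandedSupport L v).inf' hU.inl (H i)) / m) - 1) / N *
        ((∑ i, N / L * collisionWeight u v
          (argminOn (expandedSupport L u ∪ expandedSupport L v) hU.inl (H i))) / m) := by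
  simp only [unitEstimate, min_apply_argminOn, Zw_eq_collisionWeight (hH _), ← mul_sum]
  have hN1 : N + 1 ≠ 0 := by positivity
  rw [div_div_eq_mul_div, mul_div_mul_left _ _ hN1]
  field_simp

lemma hashFamilies_mul_lt_abs_mean_collisionWeight_sub_le [NeZero m] (hu : IsDiscretized L u)
    (hv : IsDiscretized L v) (hu1 : ∑ i, u i ^ 2 = 1) (hv1 : ∑ i, v i ^ 2 = 1)
    {I : Finset (Fin n)} (hI : ∀ i ∉ I, u i * v i = 0) {K s η : ℝ} (hs : 0 ≤ s) (hη : 0 < η)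
    (hK : ∑ i ∈ I, (u i ^ 2 + v i ^ 2) ≤ K * s ^ 2)
    (hW : (expandedSupport L u ∪ expandedSupport L v).Nonempty) :
    hashFamilies m (Fin n × Fin L) {H | η * s <
        |(∑ i, #(expandedSupport L u ∪ expandedSupport L v) / (L : ℝ) *
          collisionWeight u v (argminOn _ hW (H i))) / m - ∑ i, u i * v i|} ≤
      ENNReal.ofReal (2 * K / (m * η ^ 2)) := by
  have hdev := measure_pi_mul_lt_abs_mean_sub_integral_le (ι := Fin m) (K := 2 * K)
    ((memLp_comp_argminOn hW (collisionWeight u v) 2).const_mul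
      (#(expandedSupport L u ∪ expandedSupport L v) / (L : ℝ))) hs hη
    ((integral_collisionWeight_argminOn_sq_le hW hu hv hu1 hv1 hI).trans (by linarith))
  rwa [integral_collisionWeight_argminOn hW hu hv, Fintype.card_fin] at hdev

lemma hashFamilies_lt_abs_mean_inf'_sub_one_le {J : Type*} [Fintype J] [NeZero m] {W : Finset J}
    (hW : W.Nonempty) {η : ℝ} (hη : 0 < η) :
    hashFamilies m J {H | η < |(∑ i, ((#W : ℝ) + 1) * W.inf' hW (H i)) / m - 1|} ≤
      ENNReal.ofReal (2 / (m * η ^ 2)) := by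
  have hmean : ∫ h, ((#W : ℝ) + 1) * W.inf' hW h ∂(uniformHash J) = 1 := by
    rw [integral_const_mul, integral_inf']
    field_simp
  have hsq : ∫ h, (((#W : ℝ) + 1) * W.inf' hW h) ^ 2 ∂(uniformHash J) ≤ 2 * 1 ^ 2 := by
    simp_rw [mul_pow]
    rw [integral_const_mul, integral_inf'_sq, one_pow, ← mul_div_assoc,
      div_le_iff₀ (by positivity)]
    nlinarith
  have hdev := measure_pi_mul_lt_abs_mean_sub_integral_le (ι := Fin m)
    ((memLp_inf' hW 2).const_mul ((#W : ℝ) + 1)) zero_le_one hη hsq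
  rwa [hmean, Fintype.card_fin, mul_one] at hdev

lemma abs_add_one_div_sub_one_div_sub_one_le {N g η : ℝ} (hN : 1 ≤ N) (hη : η ≤ 1 / 20)
    (hg : |g - 1| ≤ η) : |((N + 1) / g - 1) / N - 1| ≤ 40 / 19 * η := by
  have hg_ge : 19 / 20 ≤ g := by linarith [(abs_le.1 hg).1]
  have hg0 : 0 < g := by linarith
  have hN_inv : 1 / N ≤ 1 := by
    rw [div_le_one (by linarith)]
    exact hN
  have hfactor : ((N + 1) / g - 1) / N - 1 = (1 + 1 / N) * ((1 - g) / g) := by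
    field_simp
    ring
  calc |((N + 1) / g - 1) / N - 1| = (1 + 1 / N) * (|g - 1| / g) := by
        rw [hfactor, abs_mul, abs_div, abs_sub_comm, abs_of_pos hg0,
          abs_of_pos (by positivity : 0 < 1 + 1 / N)]
    _ ≤ (1 + 1) * (η / (19 / 20)) := by
        have := (abs_nonneg _).trans hg
        gcongr
    _ = 40 / 19 * η := by ring

lemma abs_mul_sub_le_of_abs_sub_le {r X ν ρ ε T : ℝ} (hε : ε ≤ 1) (hr : |r - 1| ≤ ε / 9)
    (hX : |X - ν| ≤ ε / 20 * T) (hν : |ν| ≤ 3 / 2 * T) (hρ : |ν - ρ| ≤ 5 / 8 * ε * T) :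
    |r * X - ρ| ≤ ε * T := by
  have hε0 : 0 ≤ ε := by linarith [(abs_nonneg _).trans hr]
  have hT0 : 0 ≤ T := by linarith [(abs_nonneg _).trans hν]
  calc |r * X - ρ| = |(r - 1) * (X - ν) + (X - ν) + (r - 1) * ν + (ν - ρ)| := by
        congr 1
        ring
    _ ≤ |(r - 1) * (X - ν)| + |X - ν| + |(r - 1) * ν| + |ν - ρ| := by
        exact (abs_add_le _ _).trans (by gcongr; exact abs_add_three _ _ _)
    _ ≤ ε / 9 * (1 / 20 * T) + ε / 20 * T + ε / 9 * (3 / 2 * T) + 5 / 8 * ε * T := by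
        rw [abs_mul, abs_mul]
        gcongr
        exact hX.trans (by gcongr)
    _ ≤ ε * T := by linarith [mul_nonneg hε0 hT0]

lemma hashFamilies_ae_injective {J : Type*} [Fintype J] :
    ∀ᵐ H ∂(hashFamilies m J), ∀ i, Function.Injective (H i) :=
  ae_all_iff.2 fun i => (Measure.tendsto_eval_ae_ae (i := i)).eventually uniformHash_ae_injective

theorem one_sub_le_hashFamilies_abs_unitEstimate_sub_le (hu : IsDiscretized L u)
    (hv : IsDiscretized L v) (hu1 : ∑ i, u i ^ 2 = 1) (hv1 : ∑ i, v i ^ 2 = 1)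
    {I : Finset (Fin n)} (hI : ∀ i ∉ I, u i * v i = 0) {ε T ρ δ : ℝ} (hε0 : 0 < ε) (hε1 : ε ≤ 1)
    (hT : 0 ≤ T) (hIT : ∑ i ∈ I, (u i ^ 2 + v i ^ 2) ≤ 9 / 2 * T ^ 2)
    (hν : |∑ i, u i * v i| ≤ 3 / 2 * T) (hρ : |∑ i, u i * v i - ρ| ≤ 5 / 8 * ε * T) (hδ : 0 < δ)
    (hm : 4400 / (δ * ε ^ 2) ≤ m) (hU : (expandedSupport L u).Nonempty)
    (hV : (expandedSupport L v).Nonempty) :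
    1 - ENNReal.ofReal δ ≤ hashFamilies m (Fin n × Fin L)
      {H | |unitEstimate u v hU hV H - ρ| ≤ ε * T} := by
  have hm0 : (0 : ℝ) < m := lt_of_lt_of_le (by positivity) hm
  have : NeZero m := ⟨by exact_mod_cast hm0.ne'⟩
  have hη : 0 < ε / 20 := by positivity
  have hW : (expandedSupport L u ∪ expandedSupport L v).Nonempty := hU.inl
  have hN : (1 : ℝ) ≤ #(expandedSupport L u ∪ expandedSupport L v) := by
    exact_mod_cast hW.card_pos
  -- `4400 = (2 * (9 / 2) + 2) * 20 ^ 2`: two Chebyshev bounds at relative accuracy `ε / 20`.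
  have hδ_le : ENNReal.ofReal (2 * (9 / 2) / (m * (ε / 20) ^ 2)) +
      ENNReal.ofReal (2 / (m * (ε / 20) ^ 2)) ≤ ENNReal.ofReal δ := by
    rw [← ENNReal.ofReal_add (by positivity) (by positivity)]
    refine ENNReal.ofReal_le_ofReal ?_
    rw [div_le_iff₀ (by positivity)] at hm
    rw [← add_div, div_le_iff₀ (by positivity)]
    linarith
  refine (tsub_le_tsub_left hδ_le 1).trans (one_sub_add_le_measure
    (hashFamilies_mul_lt_abs_mean_collisionWeight_sub_le hu hv hu1 hv1 hI hT hη hIT hW)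
    (hashFamilies_lt_abs_mean_inf'_sub_one_le hW hη) ?_)
  filter_upwards [hashFamilies_ae_injective] with H hH hX hg
  simp only [not_lt] at hX hg ⊢
  rw [unitEstimate_eq hH (zero_lt_one.trans_le hN)]
  refine abs_mul_sub_le_of_abs_sub_le hε1 ?_ hX hν hρ
  have hr := abs_add_one_div_sub_one_div_sub_one_le hN (by linarith) hg
  linarith

end Estimate

section Norm

variable {n : ℕ} {I : Finset (Fin n)}

lemma vnormOn_nonneg (x : Fin n → ℝ) : 0 ≤ vnormOn I x := Real.sqrt_nonneg _

lemma sq_vnormOn (x : Fin n → ℝ) : vnormOn I x ^ 2 = ∑ i ∈ I, x i ^ 2 :=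
  Real.sq_sqrt (sum_nonneg fun _ _ => sq_nonneg _)

lemma vnormOn_le_vnorm (x : Fin n → ℝ) : vnormOn I x ≤ vnorm x :=
  Real.sqrt_le_sqrt (sum_le_univ_sum_of_nonneg fun _ => sq_nonneg _)

lemma vnorm_pos {x : Fin n → ℝ} (hx : x ≠ 0) : 0 < vnorm x := by
  obtain ⟨i, hi⟩ := Function.ne_iff.1 hx
  exact Real.sqrt_pos.2 (sum_pos' (fun _ _ => sq_nonneg _) ⟨i, mem_univ i, sq_pos_of_ne_zero hi⟩)

lemma vnormOn_div (x : Fin n → ℝ) {c : ℝ} (hc : 0 ≤ c) :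
    vnormOn I (fun i => x i / c) = vnormOn I x / c := by
  simp only [vnormOn, div_pow]
  rw [← sum_div, Real.sqrt_div' _ (sq_nonneg _), Real.sqrt_sq hc]

lemma sum_sq_div_vnorm {x : Fin n → ℝ} (hx : x ≠ 0) : ∑ i, (x i / vnorm x) ^ 2 = 1 := by
  rw [← sq_vnormOn, vnormOn_div _ (vnorm_pos hx).le]
  change (vnorm x / vnorm x) ^ 2 = 1
  rw [div_self (vnorm_pos hx).ne', one_pow]

lemma abs_sum_mul_le_vnormOn (x y : Fin n → ℝ) :
    |∑ i ∈ I, x i * y i| ≤ vnormOn I x * vnormOn I y := by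
  refine abs_le_of_sq_le_sq ?_ (mul_nonneg (vnormOn_nonneg x) (vnormOn_nonneg y))
  rw [mul_pow, sq_vnormOn, sq_vnormOn]
  exact sum_mul_sq_le_sq_mul_sq I x y

lemma sum_mul_eq_sum_on {x y : Fin n → ℝ} (hxy : ∀ i ∉ I, x i * y i = 0) :
    ∑ i, x i * y i = ∑ i ∈ I, x i * y i :=
  (sum_subset (subset_univ I) fun i _ => hxy i).symm

lemma abs_sum_mul_sub_sum_mul_le {u v z w : Fin n → ℝ} (huv : ∀ i ∉ I, u i * v i = 0)
    (hzw : ∀ i ∉ I, z i * w i = 0) :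
    |∑ i, u i * v i - ∑ i, z i * w i| ≤
      vnormOn I u * vnorm (v - w) + vnormOn I w * vnorm (u - z) := by
  have hsplit : ∑ i, u i * v i - ∑ i, z i * w i =
      ∑ i ∈ I, u i * (v - w) i + ∑ i ∈ I, w i * (u - z) i := by
    rw [sum_mul_eq_sum_on huv, sum_mul_eq_sum_on hzw, ← sum_sub_distrib, ← sum_add_distrib]
    exact sum_congr rfl fun i _ => by simp only [Pi.sub_apply]; ring
  rw [hsplit]
  exact (abs_add_le _ _).trans <| add_le_add
    ((abs_sum_mul_le_vnormOn _ _).trans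
      (mul_le_mul_of_nonneg_left (vnormOn_le_vnorm _) (vnormOn_nonneg _)))
    ((abs_sum_mul_le_vnormOn _ _).trans
      (mul_le_mul_of_nonneg_left (vnormOn_le_vnorm _) (vnormOn_nonneg _)))

end Norm

section Rounding

lemma floor_mul_div_le (x : ℝ) (L : ℕ) (hx : 0 ≤ x) : (⌊x * L⌋ : ℝ) / L ≤ x :=
  div_le_of_le_mul₀ (Nat.cast_nonneg L) hx (Int.floor_le _)

lemma sub_floor_mul_div_le (x : ℝ) {L : ℕ} (hL : 0 < L) : x - (⌊x * L⌋ : ℝ) / L ≤ 1 / L := by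
  have hL' : (0 : ℝ) < L := by exact_mod_cast hL
  rw [sub_le_iff_le_add', ← add_div, le_div_iff₀ hL']
  exact (Int.lt_floor_add_one _).le

lemma sq_sign_mul_sqrt {x y : ℝ} (hy : 0 ≤ y) (hxy : x = 0 → y = 0) :
    (x.sign * √y) ^ 2 = y := by
  rw [mul_pow, Real.sq_sqrt hy]
  rcases eq_or_ne x 0 with hx | hx
  · simp [hxy hx]
  · rcases Real.sign_apply_eq_of_ne_zero x hx with h | h <;> simp [h]

lemma sq_sub_le_abs_sq_sub_sq {x y : ℝ} (hxy : 0 ≤ x * y) : (x - y) ^ 2 ≤ |x ^ 2 - y ^ 2| := by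
  have habs : |x - y| ≤ |x + y| := sq_le_sq.1 (by linarith [add_sq x y, sub_sq x y])
  rw [← sq_abs, sq, sq_sub_sq, abs_mul]
  gcongr

variable {n L : ℕ} {z : Fin n → ℝ}

lemma roundVec_eq_zero {i : Fin n} (hi : z i = 0) : roundVec z L i = 0 := by
  simp only [roundVec, dif_neg i.pos.ne']
  split_ifs with himax
  · rw [← himax, hi, Real.sign_zero, zero_mul]
  · rw [hi, Real.sign_zero, zero_mul]

lemma roundVec_mul_nonneg (z : Fin n → ℝ) (L : ℕ) (i : Fin n) : 0 ≤ roundVec z L i * z i := by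
  simp only [roundVec, dif_neg i.pos.ne']
  split_ifs with himax
  · rw [← himax, mul_right_comm]
    exact mul_nonneg (Real.sign_mul_nonneg _) (Real.sqrt_nonneg _)
  · rw [mul_right_comm]
    exact mul_nonneg (Real.sign_mul_nonneg _) (Real.sqrt_nonneg _)

variable [NeZero n]

lemma abs_le_abs_maxIndex (z : Fin n → ℝ) (i : Fin n) : |z i| ≤ |z (maxIndex z)| :=
  (exists_max_image univ (fun i => |z i|) univ_nonempty).choose_spec.2 i (mem_univ i)

lemma one_le_mul_sq_maxIndex (hz : ∑ i, z i ^ 2 = 1) : 1 ≤ n * z (maxIndex z) ^ 2 := by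
  calc 1 = ∑ i, z i ^ 2 := hz.symm
    _ ≤ ∑ _i : Fin n, z (maxIndex z) ^ 2 :=
      sum_le_sum fun i _ => sq_le_sq.2 (abs_le_abs_maxIndex z i)
    _ = n * z (maxIndex z) ^ 2 := by simp

lemma sq_sign_mul_sqrt_floor (x : ℝ) (L : ℕ) :
    (x.sign * √((⌊x ^ 2 * L⌋ : ℝ) / L)) ^ 2 = ⌊x ^ 2 * L⌋ / L :=
  sq_sign_mul_sqrt (div_nonneg (Int.cast_nonneg (Int.floor_nonneg.2 (by positivity)))
    (Nat.cast_nonneg L)) fun hx => by simp [hx]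

lemma sq_roundVec_of_ne {i : Fin n} (hi : i ≠ maxIndex z) :
    roundVec z L i ^ 2 = ⌊z i ^ 2 * L⌋ / L := by
  simp only [roundVec, dif_neg (NeZero.ne n), if_neg hi, sq_sign_mul_sqrt_floor]

lemma sq_roundVec_maxIndex (hz : ∑ i, z i ^ 2 = 1) :
    roundVec z L (maxIndex z) ^ 2 =
      1 - ∑ i ∈ univ.erase (maxIndex z), (⌊z i ^ 2 * L⌋ : ℝ) / L := by
  have hmass : ∑ i ∈ univ.erase (maxIndex z), (⌊z i ^ 2 * L⌋ : ℝ) / L ≤ 1 := by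
    calc ∑ i ∈ univ.erase (maxIndex z), (⌊z i ^ 2 * L⌋ : ℝ) / L
        ≤ ∑ i ∈ univ.erase (maxIndex z), z i ^ 2 :=
          sum_le_sum fun i _ => floor_mul_div_le _ L (sq_nonneg _)
      _ ≤ ∑ i, z i ^ 2 := sum_le_univ_sum_of_nonneg fun i => sq_nonneg _
      _ = 1 := hz
  have hne : z (maxIndex z) ≠ 0 := fun h0 => by
    have := one_le_mul_sq_maxIndex hz
    simp [h0] at this
    linarith
  simp only [roundVec, dif_neg (NeZero.ne n), if_pos, sq_sign_mul_sqrt_floor]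
  rw [← add_sum_erase _ _ (mem_univ (maxIndex z)), sub_add_eq_sub_sub_swap, add_sub_cancel,
    sq_sign_mul_sqrt (sub_nonneg.2 hmass) fun h => absurd h hne]

lemma sum_sq_roundVec (hz : ∑ i, z i ^ 2 = 1) : ∑ i, roundVec z L i ^ 2 = 1 := by
  rw [← add_sum_erase _ _ (mem_univ (maxIndex z)), sq_roundVec_maxIndex hz,
    sum_congr rfl fun i hi => sq_roundVec_of_ne (ne_of_mem_erase hi), sub_add_cancel]

lemma vnorm_roundVec (hz : ∑ i, z i ^ 2 = 1) : vnorm (roundVec z L) = 1 := by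
  rw [vnorm, sum_sq_roundVec hz, Real.sqrt_one]

lemma isDiscretized_roundVec (hz : ∑ i, z i ^ 2 = 1) (hL : 0 < L) :
    IsDiscretized L (roundVec z L) := fun i => by
  have hL' : (0 : ℝ) < L := by exact_mod_cast hL
  obtain ⟨k, hk⟩ : ∃ k : ℤ, roundVec z L i ^ 2 * L = k := by
    by_cases hi : i = maxIndex z
    · refine ⟨L - ∑ j ∈ univ.erase (maxIndex z), ⌊z j ^ 2 * L⌋, ?_⟩
      rw [hi, sq_roundVec_maxIndex hz, ← sum_div, sub_mul, div_mul_cancel₀ _ hL'.ne', one_mul]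
      push_cast
      rfl
    · exact ⟨⌊z i ^ 2 * L⌋, by rw [sq_roundVec_of_ne hi, div_mul_cancel₀ _ hL'.ne']⟩
  have hk0 : 0 ≤ k := by
    have : (0 : ℝ) ≤ k := hk ▸ by positivity
    exact_mod_cast this
  have hsq_le : roundVec z L i ^ 2 ≤ 1 :=
    sum_sq_roundVec (L := L) hz ▸ single_le_sum (f := fun j => roundVec z L j ^ 2)
      (fun j _ => sq_nonneg _) (mem_univ i)
  lift k to ℕ using hk0
  refine ⟨k, ?_, by exact_mod_cast hk⟩
  have : (k : ℝ) ≤ L := by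
    calc (k : ℝ) = roundVec z L i ^ 2 * L := by exact_mod_cast hk.symm
      _ ≤ L := mul_le_of_le_one_left hL'.le hsq_le
  exact_mod_cast this

lemma sq_roundVec_maxIndex_sub_sq (hz : ∑ i, z i ^ 2 = 1) :
    roundVec z L (maxIndex z) ^ 2 - z (maxIndex z) ^ 2 =
      ∑ i ∈ univ.erase (maxIndex z), (z i ^ 2 - ⌊z i ^ 2 * L⌋ / L) := by
  rw [← add_sum_erase _ _ (mem_univ (maxIndex z))] at hz
  rw [sq_roundVec_maxIndex (by rwa [← add_sum_erase _ _ (mem_univ (maxIndex z))]),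
    sum_sub_distrib]
  linarith

lemma sq_roundVec_maxIndex_sub_sq_le (hz : ∑ i, z i ^ 2 = 1) (hL : 0 < L) :
    roundVec z L (maxIndex z) ^ 2 - z (maxIndex z) ^ 2 ≤ ((n : ℝ) - 1) / L := by
  rw [sq_roundVec_maxIndex_sub_sq hz]
  refine (sum_le_sum fun i _ => sub_floor_mul_div_le _ hL).trans_eq ?_
  rw [sum_const, card_erase_of_mem (mem_univ _), card_univ, Fintype.card_fin, nsmul_eq_mul,
    Nat.cast_pred (NeZero.pos n)]
  ring

lemma sq_roundVec_le (hz : ∑ i, z i ^ 2 = 1) (hL : (n : ℝ) ^ 2 ≤ L) (i : Fin n) :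
    roundVec z L i ^ 2 ≤ 2 * z i ^ 2 := by
  by_cases hi : i = maxIndex z
  · have hn : (0 : ℝ) < n := by exact_mod_cast NeZero.pos n
    have hL' : (0 : ℝ) < L := (pow_pos hn 2).trans_le hL
    have hgap : ((n : ℝ) - 1) / L ≤ z (maxIndex z) ^ 2 := by
      calc ((n : ℝ) - 1) / L ≤ n / n ^ 2 := by gcongr; linarith
        _ = 1 / n := by field_simp
        _ ≤ z (maxIndex z) ^ 2 := by
          rw [div_le_iff₀' hn]
          exact one_le_mul_sq_maxIndex hz
    rw [hi]
    linarith [sq_roundVec_maxIndex_sub_sq_le hz (L := L) (by exact_mod_cast hL')]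
  · rw [sq_roundVec_of_ne hi]
    linarith [floor_mul_div_le (z i ^ 2) L (sq_nonneg _), sq_nonneg (z i)]

lemma sum_sq_roundVec_sub_le (hz : ∑ i, z i ^ 2 = 1) (hL : 0 < L) :
    ∑ i, (roundVec z L i - z i) ^ 2 ≤ 2 * ((n : ℝ) - 1) / L := by
  have hgap (i : Fin n) : 0 ≤ z i ^ 2 - ⌊z i ^ 2 * L⌋ / L :=
    sub_nonneg.2 (floor_mul_div_le _ L (sq_nonneg _))
  have hmax := sq_roundVec_maxIndex_sub_sq (L := L) hz
  calc ∑ i, (roundVec z L i - z i) ^ 2 ≤ ∑ i, |roundVec z L i ^ 2 - z i ^ 2| :=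
        sum_le_sum fun i _ => sq_sub_le_abs_sq_sub_sq (roundVec_mul_nonneg z L i)
    _ = 2 * (roundVec z L (maxIndex z) ^ 2 - z (maxIndex z) ^ 2) := by
        rw [← add_sum_erase _ _ (mem_univ (maxIndex z)),
          abs_of_nonneg (hmax ▸ sum_nonneg fun i _ => hgap i), two_mul]
        congr 1
        rw [hmax]
        refine sum_congr rfl fun i hi => ?_
        rw [sq_roundVec_of_ne (ne_of_mem_erase hi), abs_sub_comm, abs_of_nonneg (hgap i)]
    _ ≤ 2 * ((n : ℝ) - 1) / L := by
        rw [mul_div_assoc]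
        gcongr
        exact sq_roundVec_maxIndex_sub_sq_le hz hL

lemma vnormOn_roundVec_le (hz : ∑ i, z i ^ 2 = 1) (hL : (n : ℝ) ^ 2 ≤ L) (I : Finset (Fin n)) :
    vnormOn I (roundVec z L) ≤ 3 / 2 * vnormOn I z := by
  refine le_of_sq_le_sq ?_ (mul_nonneg (by norm_num) (vnormOn_nonneg z))
  calc vnormOn I (roundVec z L) ^ 2 ≤ 2 * vnormOn I z ^ 2 := by
        rw [sq_vnormOn, sq_vnormOn, mul_sum]
        exact sum_le_sum fun i _ => sq_roundVec_le hz hL i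
    _ ≤ (3 / 2 * vnormOn I z) ^ 2 := by
        rw [mul_pow]
        gcongr
        norm_num

lemma vnorm_roundVec_sub_le (hz : ∑ i, z i ^ 2 = 1) {ε : ℝ} (hε : 0 < ε)
    (hL : 9 * (n : ℝ) ^ 2 / ε ^ 2 ≤ L) : vnorm (roundVec z L - z) ≤ ε / 4 := by
  have hn : (0 : ℝ) < n := by exact_mod_cast NeZero.pos n
  have hL' : (0 : ℝ) < L := lt_of_lt_of_le (by positivity) hL
  refine Real.sqrt_le_iff.2 ⟨by positivity, ?_⟩
  refine (sum_sq_roundVec_sub_le hz (by exact_mod_cast hL')).trans ?_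
  rw [div_le_iff₀ (by positivity)] at hL ⊢
  linarith [sq_nonneg ((n : ℝ) - 2), sq_nonneg (n : ℝ)]

end Rounding

section Main

variable {n L m : ℕ}

theorem one_sub_le_hashFamilies_abs_unitEstimate_roundVec_sub_le {z w : Fin n → ℝ}
    (hz : ∑ i, z i ^ 2 = 1) (hw : ∑ i, w i ^ 2 = 1) {I : Finset (Fin n)}
    (hI : ∀ i ∉ I, z i = 0 ∨ w i = 0) {ε δ : ℝ} (hε0 : 0 < ε) (hε1 : ε ≤ 1) (hδ : 0 < δ)
    (hL : 9 * (n : ℝ) ^ 2 / ε ^ 2 ≤ L) (hm : 4400 / (δ * ε ^ 2) ≤ m)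
    (hU : (expandedSupport L (roundVec z L)).Nonempty)
    (hV : (expandedSupport L (roundVec w L)).Nonempty) :
    1 - ENNReal.ofReal δ ≤ hashFamilies m (Fin n × Fin L)
      {H | |unitEstimate (roundVec z L) (roundVec w L) hU hV H - ∑ i, z i * w i| ≤
        ε * max (vnormOn I z) (vnormOn I w)} := by
  have : NeZero n := ⟨by rintro rfl; simp at hz⟩
  have hL0 : 0 < L := by
    obtain ⟨p, -⟩ := hU
    exact p.2.pos
  have hnL : (n : ℝ) ^ 2 ≤ L := by
    refine le_trans ?_ hL
    rw [le_div_iff₀ (by positivity)]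
    nlinarith [pow_le_one₀ hε0.le hε1 (n := 2), sq_nonneg (n : ℝ)]
  set u := roundVec z L
  set v := roundVec w L
  set T := max (vnormOn I z) (vnormOn I w)
  have hT : 0 ≤ T := (vnormOn_nonneg z).trans (le_max_left _ _)
  have hzw : ∀ i ∉ I, z i * w i = 0 := fun i hi => mul_eq_zero.2 (hI i hi)
  have huv : ∀ i ∉ I, u i * v i = 0 := fun i hi =>
    mul_eq_zero.2 ((hI i hi).imp roundVec_eq_zero roundVec_eq_zero)
  have huT : vnormOn I u ≤ 3 / 2 * T :=
    (vnormOn_roundVec_le hz hnL I).trans (by gcongr; exact le_max_left _ _)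
  have hvT : vnormOn I v ≤ 3 / 2 * T :=
    (vnormOn_roundVec_le hw hnL I).trans (by gcongr; exact le_max_right _ _)
  refine one_sub_le_hashFamilies_abs_unitEstimate_sub_le (isDiscretized_roundVec hz hL0)
    (isDiscretized_roundVec hw hL0) (sum_sq_roundVec hz) (sum_sq_roundVec hw) huv hε0 hε1 hT
    ?_ ?_ ?_ hδ hm hU hV
  · rw [sum_add_distrib, ← sq_vnormOn, ← sq_vnormOn]
    linarith [pow_le_pow_left₀ (vnormOn_nonneg u) huT 2, pow_le_pow_left₀ (vnormOn_nonneg v) hvT 2]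
  · have hv1 : vnormOn I v ≤ 1 := (vnormOn_le_vnorm v).trans_eq (vnorm_roundVec hw)
    rw [sum_mul_eq_sum_on huv]
    exact (abs_sum_mul_le_vnormOn u v).trans
      ((mul_le_of_le_one_right (vnormOn_nonneg u) hv1).trans huT)
  · calc |∑ i, u i * v i - ∑ i, z i * w i|
        ≤ vnormOn I u * vnorm (v - w) + vnormOn I w * vnorm (u - z) :=
          abs_sum_mul_sub_sum_mul_le huv hzw
      _ ≤ 3 / 2 * T * (ε / 4) + T * (ε / 4) := by
          gcongr
          · exact vnormOn_nonneg _
          · exact vnorm_roundVec_sub_le hw hε0 hL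
          · exact vnormOn_nonneg _
          · exact le_max_right _ _
          · exact vnorm_roundVec_sub_le hz hε0 hL
      _ = 5 / 8 * ε * T := by ring

end Main

end WeightedMinHash

open WeightedMinHash in
theorem weighted_minhash_estimator_general {n L m : ℕ} {ε δ : ℝ} (hε0 : 0 < ε) (hε1 : ε ≤ 1)
    (hδ : 0 < δ) {a b : Fin n → ℝ} (ha : a ≠ 0) (hb : b ≠ 0)
    (hL : 9 * (n : ℝ) ^ 2 / ε ^ 2 ≤ L) {u v : Fin n → ℝ}
    (hu : u = roundVec (fun j => a j / vnorm a) L) (hv : v = roundVec (fun j => b j / vnorm b) L)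
    (hU : (expandedSupport L u).Nonempty) (hV : (expandedSupport L v).Nonempty)
    (hm : 4400 / (δ * ε ^ 2) ≤ m) :
    1 - ENNReal.ofReal δ ≤
      hashFamilies m (Fin n × Fin L)
        {H : Fin m → Fin n × Fin L → ℝ |
          |vnorm a * vnorm b *
              (((1 / (L : ℝ)) *
                  ((m : ℝ) / (∑ i, min (H i (argminOn (expandedSupport L u) hU (H i)))
                      (H i (argminOn (expandedSupport L v) hV (H i)))) - 1)) / m) *
              (∑ i, Zw u v hU hV (H i)) - ∑ k, a k * b k|
            ≤ ε * max (vnormOn (supp a ∩ supp b) a * vnorm b)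
                (vnorm a * vnormOn (supp a ∩ supp b) b)} := by
  subst hu hv
  have hna := vnorm_pos ha
  have hnb := vnorm_pos hb
  have hsupp : ∀ i ∉ supp a ∩ supp b, a i / vnorm a = 0 ∨ b i / vnorm b = 0 := fun i hi => by
    simp only [supp, mem_inter, mem_filter_univ, not_and_or, not_not] at hi
    exact hi.imp (by simp +contextual) (by simp +contextual)
  refine (one_sub_le_hashFamilies_abs_unitEstimate_roundVec_sub_le (sum_sq_div_vnorm ha)
    (sum_sq_div_vnorm hb) hsupp hε0 hε1 hδ hL hm hU hV).trans
    (measure_mono (Set.ofPred_subset_ofPred.2 fun H hH => ?_))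
  have hinner : ∑ k, a k * b k =
      vnorm a * vnorm b * ∑ k, a k / vnorm a * (b k / vnorm b) := by
    rw [mul_sum]
    exact sum_congr rfl fun k _ => by field_simp
  have hmax : max (vnormOn (supp a ∩ supp b) a * vnorm b) (vnorm a * vnormOn (supp a ∩ supp b) b) =
      vnorm a * vnorm b * max (vnormOn (supp a ∩ supp b) fun i => a i / vnorm a)
        (vnormOn (supp a ∩ supp b) fun i => b i / vnorm b) := by
    rw [vnormOn_div _ hna.le, vnormOn_div _ hnb.le, mul_max_of_nonneg _ _ (by positivity)]
    congr 1 <;> field_simp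
  rw [hinner, hmax, mul_left_comm ε, mul_assoc (vnorm a * vnorm b), ← mul_sub, abs_mul,
    abs_of_pos (mul_pos hna hnb)]
  gcongr
  exact hH

/-- Main result (Weighted MinHash inner product sketching, constant success probability):
there is an absolute constant `C > 0` such that for `ε ∈ (0,1)`, nonzero `a, b ∈ ℝⁿ`, an
integer `L ≥ 9n⁶/ε²`, an integer `m ≥ C/ε²`, and `m` mutually independent uniform hash
families on `{1,...,n} × {1,...,L}`, with `u = Round(a/‖a‖, L)`, `v = Round(b/‖b‖, L)`,
the estimate `F = ‖a‖ ‖b‖ (M̃/m) ∑ᵢ Zᵢ`, where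
`M̃ = (1/L)(m / ∑ᵢ min(hⁱ(ℓ_Uⁱ), hⁱ(ℓ_Vⁱ)) - 1)`, satisfies
`|F - ⟨a,b⟩| ≤ ε max(‖a_I‖ ‖b‖, ‖a‖ ‖b_I‖)` with probability at least `2/3`,
where `I = supp a ∩ supp b`. -/
theorem weighted_minhash_estimator :
    ∃ C : ℝ, 0 < C ∧
      ∀ (n : ℕ) (ε : ℝ), ε ∈ Set.Ioo (0 : ℝ) 1 →
      ∀ (a b : Fin n → ℝ), a ≠ 0 → b ≠ 0 →
      ∀ L : ℕ, 9 * (n : ℝ) ^ 6 / ε ^ 2 ≤ L →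
      ∀ u v : Fin n → ℝ,
        u = roundVec (fun j => a j / vnorm a) L →
        v = roundVec (fun j => b j / vnorm b) L →
      ∀ (hU : (expandedSupport L u).Nonempty) (hV : (expandedSupport L v).Nonempty),
      ∀ m : ℕ, C / ε ^ 2 ≤ (m : ℝ) →
        (2 : ℝ≥0∞) / 3 ≤
          hashFamilies m (Fin n × Fin L)
            {H : Fin m → Fin n × Fin L → ℝ |
              |vnorm a * vnorm b *
                  (((1 / (L : ℝ)) *
                      ((m : ℝ) / (∑ i, min (H i (argminOn (expandedSupport L u) hU (H i)))
                          (H i (argminOn (expandedSupport L v) hV (H i)))) - 1)) / m) *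
                  (∑ i, Zw u v hU hV (H i)) - ∑ k, a k * b k|
                ≤ ε * max (vnormOn (supp a ∩ supp b) a * vnorm b)
                    (vnorm a * vnormOn (supp a ∩ supp b) b)} := by
  refine ⟨13200, by norm_num, fun n ε hε a b ha hb L hL u v hu hv hU hV m hm => ?_⟩
  have hn : (1 : ℝ) ≤ n := by
    obtain ⟨i, -⟩ := Function.ne_iff.1 ha
    exact_mod_cast i.pos
  have hL' : 9 * (n : ℝ) ^ 2 / ε ^ 2 ≤ L := by
    refine le_trans ?_ hL
    gcongr
    norm_num
  have hm' : 4400 / (1 / 3 * ε ^ 2) ≤ m := by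
    refine le_trans (le_of_eq ?_) hm
    field_simp
    norm_num
  have hprob : (2 : ℝ≥0∞) / 3 = 1 - ENNReal.ofReal (1 / 3) := by
    rw [← ENNReal.ofReal_one, ← ENNReal.ofReal_sub _ (by norm_num)]
    norm_num [ENNReal.ofReal_div_of_pos]
  rw [hprob]
  exact weighted_minhash_estimator_general hε.1 hε.2.le (by norm_num) ha hb hL' hu hv hU hV hm'
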